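/- Let ρ > 1 be a real number and define the power cone of exponent ω ∈ (0,1) as K_ω = {(a,b,c) ∈ ℝ³ : a ≥ 0, b ≥ 0, a^ω · b^(1-ω) ≥ |c|}. For real w ≥ 0, real x, and y ∈ {0,1}, the triple (w, y, x) belongs to K_{1/ρ} if and only if either (y = 0 and x = 0) or (y = 1 and w ≥ |x|^ρ). -/

import Mathlib

/-- The power cone of exponent `ω`: triples `(a, b, c)` with `a ≥ 0`, `b ≥ 0` and
`a ^ ω * b ^ (1 - ω) ≥ |c|`, where powers are real powers. -/
def powerCone (ω : ℝ) : Set (ℝ × ℝ × ℝ) :=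
  {p | 0 ≤ p.1 ∧ 0 ≤ p.2.1 ∧ p.1 ^ ω * p.2.1 ^ (1 - ω) ≥ |p.2.2|}

section PowerCone

variable {ω a b c : ℝ}

theorem mem_powerCone_iff :
    (a, b, c) ∈ powerCone ω ↔ 0 ≤ a ∧ 0 ≤ b ∧ |c| ≤ a ^ ω * b ^ (1 - ω) :=
  Iff.rfl

theorem mk_zero_mem_powerCone_iff (hω : ω ≠ 1) :
    (a, 0, c) ∈ powerCone ω ↔ 0 ≤ a ∧ c = 0 := by
  have zero_rpow : (0 : ℝ) ^ (1 - ω) = 0 := Real.zero_rpow (sub_ne_zero.mpr hω.symm)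
  simp only [mem_powerCone_iff, zero_rpow, mul_zero, abs_nonpos_iff, le_refl, true_and]

theorem rpow_mul_rpow_one_sub (ha : 0 ≤ a) (hb : 0 < b) :
    a ^ ω * b ^ (1 - ω) = b * (a / b) ^ ω := by
  rw [Real.rpow_sub hb, Real.rpow_one, Real.div_rpow ha hb.le]
  ring

/-- The right-hand side is the epigraph of the perspective `b * f (c / b)` of `f t = |t| ^ ω⁻¹`. -/
theorem mem_powerCone_iff_of_pos (hω : 0 < ω) (hb : 0 < b) :
    (a, b, c) ∈ powerCone ω ↔ b * (|c| / b) ^ ω⁻¹ ≤ a := by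
  have perspective_nonneg : 0 ≤ b * (|c| / b) ^ ω⁻¹ := by positivity
  suffices h : 0 ≤ a → (|c| ≤ a ^ ω * b ^ (1 - ω) ↔ b * (|c| / b) ^ ω⁻¹ ≤ a) by
    rw [mem_powerCone_iff]
    exact ⟨fun ⟨ha, _, hc⟩ ↦ (h ha).mp hc,
      fun hc ↦ have ha := perspective_nonneg.trans hc; ⟨ha, hb.le, (h ha).mpr hc⟩⟩
  intro ha
  calc |c| ≤ a ^ ω * b ^ (1 - ω)
    _ ↔ |c| / b ≤ (a / b) ^ ω := by rw [rpow_mul_rpow_one_sub ha hb, div_le_iff₀' hb]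
    _ ↔ (|c| / b) ^ ω⁻¹ ≤ a / b :=
      (Real.rpow_inv_le_iff_of_pos (by positivity) (by positivity) hω).symm
    _ ↔ b * (|c| / b) ^ ω⁻¹ ≤ a := le_div_iff₀' hb

theorem mk_one_mem_powerCone_iff (hω : 0 < ω) :
    (a, 1, c) ∈ powerCone ω ↔ |c| ^ ω⁻¹ ≤ a := by
  rw [mem_powerCone_iff_of_pos hω one_pos, one_mul, div_one]

end PowerCone

theorem stmt_2 (ρ : ℝ) (hρ : 1 < ρ) (w x y : ℝ) (hw : 0 ≤ w) (hy : y = 0 ∨ y = 1) :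
    (w, y, x) ∈ powerCone (1 / ρ) ↔ (y = 0 ∧ x = 0) ∨ (y = 1 ∧ w ≥ |x| ^ ρ) := by
  have exponent_pos : 0 < ρ⁻¹ := inv_pos.mpr (one_pos.trans hρ)
  have exponent_ne_one : ρ⁻¹ ≠ 1 := (inv_lt_one_of_one_lt₀ hρ).ne
  rw [one_div]
  rcases hy with rfl | rfl
  · simp only [mk_zero_mem_powerCone_iff exponent_ne_one, hw, true_and, zero_ne_one, false_and,
      or_false]
  · simp only [mk_one_mem_powerCone_iff exponent_pos, inv_inv, one_ne_zero, false_and, false_or,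
      true_and, ge_iff_le]
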